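/- arXiv:1506.06531 — 2 statements merged into one kernel-verified Lean document; each statement's English description precedes it below -/
import Mathlib

section
/- The Fredholm determinant of the sine kernel on (0,s) has small-s expansion det(I − ξ𝕂_s) = 1 − ξs + (ξ²π²/36)s⁴ − (ξ²π⁴/675)s⁶ + O(s⁸) for any fixed ξ. -/
open Real Filter Asymptotics MeasureTheory
open scoped Topology

/-- The sine kernel `K(x,y) = sin(π(x−y))/(π(x−y))`, with `K(x,x) = 1`. -/
noncomputable def sineKernel (x y : ℝ) : ℝ :=
  if x = y then 1 else Real.sin (Real.pi * (x - y)) / (Real.pi * (x - y))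

/-- The Fredholm determinant `det(I − ξ𝕂ₛ)` of the sine kernel on `(0,s)`,
defined via the Fredholm series
`∑_{j≥0} ((−ξ)^j/j!) ∫_{(0,s)^j} det[K(x_a,x_b)] dx₁⋯dx_j`. -/
noncomputable def sineFredholmDet (ξ s : ℝ) : ℝ :=
  ∑' j : ℕ, ((-ξ) ^ j / (Nat.factorial j : ℝ)) *
    ∫ x : Fin j → ℝ in Set.univ.pi (fun _ => Set.Ioo 0 s),
      Matrix.det (Matrix.of fun a b => sineKernel (x a) (x b))

/-!
For points of `(0,s)` every entry of the matrix `[K(x_a,x_b)]` is `1 + O(s²)`. Subtracting the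
first row from the others bounds a `j × j` minor by `O(s^(2(j-1)))`, so the `j`-th term of the
Fredholm series is `O(s^(3j-2))` and the terms `j ≥ 4` contribute `O(s^10)`. The same bound gives
only `O(s⁷)` at `j = 3`. There the minor is, up to `O(s⁶)`, Heron's form of the three numbers
`1 - K(x_a,x_b)`. To leading order these are `(π²/6)(x_a - x_b)²`, the squared sides of a degenerate
triangle, on which Heron's form vanishes; hence the term `j = 3` is `O(s⁹)`. The stated
coefficients come from `j = 0, 1`, which are exact, and from `j = 2`, where
`1 - sinc² t = t²/3 - 2t⁴/45 + O(t⁶)`.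
-/

section TrigTaylor

lemma hasDerivAt_pow_succ_div_factorial (n : ℕ) (x : ℝ) :
    HasDerivAt (fun t : ℝ => t ^ (n + 1) / (n + 1).factorial) (x ^ n / n.factorial) x := by
  refine ((hasDerivAt_pow (n + 1) x).div_const _).congr_deriv ?_
  rw [Nat.factorial_succ]
  push_cast
  field_simp

lemma abs_le_pow_div_factorial_of_hasDerivAt {f f' : ℝ → ℝ} {n : ℕ} (h0 : f 0 = 0)
    (hf : ∀ x, HasDerivAt f (f' x) x) (hf' : ∀ x, |f' x| ≤ |x| ^ n / n.factorial) (x : ℝ) :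
    |f x| ≤ |x| ^ (n + 1) / (n + 1).factorial := by
  wlog hx : 0 ≤ x generalizing f f' x
  · simpa using this (f := fun y => f (-y)) (f' := fun y => -f' (-y)) (by simpa using h0)
      (fun y => by simpa [Function.comp_def] using (hf (-y)).comp y (hasDerivAt_neg y))
      (fun y => by simpa using hf' (-y)) (-x) (by linarith)
  have hbound : ∀ y ∈ Set.Ico 0 x, ‖f' y‖ ≤ y ^ n / n.factorial := fun y hy => by
    simpa [abs_of_nonneg hy.1] using hf' y
  simpa [abs_of_nonneg hx] using image_norm_le_of_norm_deriv_right_le_deriv_boundary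
    (fun y _ => (hf y).continuousAt.continuousWithinAt) (fun y _ => (hf y).hasDerivWithinAt)
    (by simp [h0]) (hasDerivAt_pow_succ_div_factorial n) hbound (Set.right_mem_Icc.mpr hx)

/-- The error of the first `n` terms of the Maclaurin series of `cos`. -/
noncomputable def cosRemainder (n : ℕ) (x : ℝ) : ℝ :=
  cos x - ∑ k ∈ Finset.range n, (-1) ^ k * x ^ (2 * k) / (2 * k).factorial

/-- The error of the first `n` terms of the Maclaurin series of `sin`. -/
noncomputable def sinRemainder (n : ℕ) (x : ℝ) : ℝ :=
  sin x - ∑ k ∈ Finset.range n, (-1) ^ k * x ^ (2 * k + 1) / (2 * k + 1).factorial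

lemma hasDerivAt_sinRemainder (n : ℕ) (x : ℝ) :
    HasDerivAt (sinRemainder n) (cosRemainder n x) x := by
  refine (hasDerivAt_sin x).sub (HasDerivAt.fun_sum fun k _ => ?_)
  simpa only [mul_div_assoc] using
    (hasDerivAt_pow_succ_div_factorial (2 * k) x).const_mul ((-1) ^ k)

lemma hasDerivAt_cosRemainder_succ (n : ℕ) (x : ℝ) :
    HasDerivAt (cosRemainder (n + 1)) (-sinRemainder n x) x := by
  have hterm (k : ℕ) : HasDerivAt
      (fun t : ℝ => (-1) ^ (k + 1) * t ^ (2 * (k + 1)) / (2 * (k + 1)).factorial)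
      (-((-1) ^ k * x ^ (2 * k + 1) / (2 * k + 1).factorial)) x := by
    simp only [mul_div_assoc]
    exact ((hasDerivAt_pow_succ_div_factorial (2 * k + 1) x).const_mul _).congr_deriv (by ring)
  have hsum := HasDerivAt.fun_sum (u := Finset.range n) fun k _ => hterm k
  refine (((hasDerivAt_cos x).sub (hsum.add_const 1)).congr_deriv ?_).congr_of_eventuallyEq ?_
  · rw [sinRemainder, Finset.sum_neg_distrib]
    ring
  · exact .of_forall fun t => by simp [cosRemainder, Finset.sum_range_succ']

lemma abs_sinRemainder_le_of_cosRemainder {n : ℕ}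
    (h : ∀ x, |cosRemainder n x| ≤ |x| ^ (2 * n) / (2 * n).factorial) (x : ℝ) :
    |sinRemainder n x| ≤ |x| ^ (2 * n + 1) / (2 * n + 1).factorial :=
  abs_le_pow_div_factorial_of_hasDerivAt (by simp [sinRemainder])
    (hasDerivAt_sinRemainder n) h x

theorem abs_cosRemainder_le (n : ℕ) (x : ℝ) :
    |cosRemainder n x| ≤ |x| ^ (2 * n) / (2 * n).factorial := by
  induction n generalizing x with
  | zero => simpa [cosRemainder] using abs_cos_le_one x
  | succ n ih =>
    refine abs_le_pow_div_factorial_of_hasDerivAt ?_ (hasDerivAt_cosRemainder_succ n)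
      (fun y => ?_) x
    · simp [cosRemainder, Finset.sum_range_succ']
    · simpa using abs_sinRemainder_le_of_cosRemainder ih y

theorem abs_sinRemainder_le (n : ℕ) (x : ℝ) :
    |sinRemainder n x| ≤ |x| ^ (2 * n + 1) / (2 * n + 1).factorial :=
  abs_sinRemainder_le_of_cosRemainder (abs_cosRemainder_le n) x

theorem abs_sinc_sub_sum_le (n : ℕ) (x : ℝ) :
    |sinc x - ∑ k ∈ Finset.range n, (-1) ^ k * x ^ (2 * k) / (2 * k + 1).factorial|
      ≤ |x| ^ (2 * n) / (2 * n + 1).factorial := by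
  rcases eq_or_ne x 0 with rfl | hx
  · cases n <;> simp [Finset.sum_range_succ']
  refine le_of_mul_le_mul_left ?_ (abs_pos.mpr hx)
  calc |x| * |sinc x - ∑ k ∈ Finset.range n, (-1) ^ k * x ^ (2 * k) / (2 * k + 1).factorial|
      = |sinRemainder n x| := by
        rw [← abs_mul, mul_sub, sinc_of_ne_zero hx, mul_div_cancel₀ _ hx, Finset.mul_sum]
        refine congrArg (fun S => |sin x - S|) (Finset.sum_congr rfl fun k _ => ?_)
        ring
    _ ≤ |x| ^ (2 * n + 1) / (2 * n + 1).factorial := abs_sinRemainder_le n x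
    _ = |x| * (|x| ^ (2 * n) / (2 * n + 1).factorial) := by ring

lemma one_sub_sinc_nonneg (x : ℝ) : 0 ≤ 1 - sinc x :=
  sub_nonneg.mpr (sinc_le_one x)

lemma one_sub_sinc_le (x : ℝ) : 1 - sinc x ≤ x ^ 2 / 6 := by
  have h : |sinc x - 1| ≤ x ^ 2 / 6 := by simpa [Nat.factorial] using abs_sinc_sub_sum_le 1 x
  linarith [neg_le_of_abs_le h]

lemma abs_one_sub_sinc_sub_le (x : ℝ) : |1 - sinc x - x ^ 2 / 6| ≤ x ^ 4 / 120 := by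
  have h : |sinc x - (1 - x ^ 2 / 6)| ≤ x ^ 4 / 120 := by
    convert abs_sinc_sub_sum_le 2 x using 2
    · simp only [Finset.sum_range_succ, Finset.sum_range_zero, Nat.factorial]
      push_cast
      ring
    · exact ((by decide : Even 4).pow_abs x).symm
    · simp [Nat.factorial]
  rwa [abs_sub_comm, sub_right_comm] at h

lemma abs_one_sub_sinc_sq_sub_le (x : ℝ) :
    |1 - sinc x ^ 2 - (x ^ 2 / 3 - 2 * x ^ 4 / 45)| ≤ x ^ 6 / 315 := by
  rcases eq_or_ne x 0 with rfl | hx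
  · simp
  have hcos := abs_cosRemainder_le 4 (2 * x)
  have hpow : |2 * x| ^ 8 = 256 * x ^ 8 := by
    rw [(by decide : Even 8).pow_abs]
    ring
  have hrem : cosRemainder 4 (2 * x) =
      2 * x ^ 2 * (1 - sinc x ^ 2 - (x ^ 2 / 3 - 2 * x ^ 4 / 45)) := by
    rw [cosRemainder, cos_two_mul, cos_sq', sinc_of_ne_zero hx]
    simp only [Finset.sum_range_succ, Finset.sum_range_zero, Nat.factorial]
    field_simp
    push_cast
    ring
  rw [hrem, hpow, abs_mul, abs_of_pos (by positivity)] at hcos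
  refine le_of_mul_le_mul_left (hcos.trans_eq ?_) (by positivity : 0 < 2 * x ^ 2)
  simp only [Nat.factorial]
  push_cast
  ring

end TrigTaylor

section DeterminantBounds

variable {R : Type*} [NormedCommRing R] [NormOneClass R]

lemma norm_det_le_factorial_mul_prod {ι : Type*} [Fintype ι] [DecidableEq ι]
    {A : Matrix ι ι R} {r : ι → ℝ} (h : ∀ i j, ‖A i j‖ ≤ r i) :
    ‖A.det‖ ≤ (Fintype.card ι).factorial * ∏ i, r i := by
  have hterm (σ : Equiv.Perm ι) : ‖Equiv.Perm.sign σ • ∏ i, A (σ i) i‖ ≤ ∏ i, r i :=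
    calc ‖Equiv.Perm.sign σ • ∏ i, A (σ i) i‖
        ≤ ∏ i, ‖A (σ i) i‖ := by
          rw [norm_units_zsmul]
          exact Finset.norm_prod_le _ fun i => A (σ i) i
      _ ≤ ∏ i, r (σ i) := Finset.prod_le_prod (fun _ _ => norm_nonneg _) fun i _ => h (σ i) i
      _ = ∏ i, r i := Equiv.prod_comp σ r
  rw [Matrix.det_apply, ← Fintype.card_perm, ← nsmul_eq_mul]
  exact norm_sum_le_of_le _ (fun σ _ => hterm σ) |>.trans_eq (by simp)

lemma norm_det_le_of_norm_row_sub_le {n : ℕ} {A : Matrix (Fin (n + 1)) (Fin (n + 1)) R}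
    {b δ : ℝ} (hrow : ∀ j, ‖A 0 j‖ ≤ b) (hsub : ∀ i j, ‖A (Fin.succ i) j - A 0 j‖ ≤ δ) :
    ‖A.det‖ ≤ (n + 1).factorial * (b * δ ^ n) := by
  let B : Matrix (Fin (n + 1)) (Fin (n + 1)) R :=
    Matrix.of (Fin.cons (A 0) fun i j => A i.succ j - A 0 j)
  have hdet : A.det = B.det :=
    Matrix.det_eq_of_forall_row_eq_smul_add_const (Fin.cons 0 fun _ => 1) 0 rfl fun i j => by
      cases i using Fin.cases <;> simp [B]
  have hB : ∀ i j, ‖B i j‖ ≤ (Fin.cons b fun _ => δ : Fin (n + 1) → ℝ) i := fun i j => by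
    cases i using Fin.cases with
    | zero => simpa [B] using hrow j
    | succ i => simpa [B] using hsub i j
  simpa [hdet, Fin.prod_univ_succ] using norm_det_le_factorial_mul_prod hB

end DeterminantBounds

section HeronForm

/-- Heron's quadratic form: for a triangle with side lengths `√a`, `√b`, `√c` it is sixteen times
the squared area. It is the leading part of a `3 × 3` Gram determinant near the all-ones matrix,
see `det_fin_three_eq_heronForm`. -/
def heronForm {R : Type*} [CommRing R] (a b c : R) : R :=
  2 * (a * b + b * c + c * a) - (a ^ 2 + b ^ 2 + c ^ 2)

lemma heronForm_mul_sq_add {R : Type*} [CommRing R] (k p q : R) :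
    heronForm (k * p ^ 2) (k * q ^ 2) (k * (p + q) ^ 2) = 0 := by
  rw [heronForm]
  ring

lemma det_fin_three_eq_heronForm {R : Type*} [CommRing R] (a b c : R) :
    !![1, 1 - a, 1 - c; 1 - a, 1, 1 - b; 1 - c, 1 - b, 1].det
      = heronForm a b c - 2 * (a * b * c) := by
  rw [Matrix.det_fin_three, heronForm]
  simp only [Matrix.of_apply, Matrix.cons_val', Matrix.cons_val]
  ring

lemma abs_heronForm_sub_le {a b c a' b' c' M ε : ℝ} (ha : |a| ≤ M) (hb : |b| ≤ M) (hc : |c| ≤ M)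
    (ha' : |a'| ≤ M) (hb' : |b'| ≤ M) (hc' : |c'| ≤ M)
    (haε : |a - a'| ≤ ε) (hbε : |b - b'| ≤ ε) (hcε : |c - c'| ≤ ε) :
    |heronForm a b c - heronForm a' b' c'| ≤ 18 * M * ε := by
  have hterm {x y z x' y' z' : ℝ} (hx : |x| ≤ M) (hy : |y| ≤ M) (hz : |z| ≤ M) (hx' : |x'| ≤ M)
      (hy' : |y'| ≤ M) (hz' : |z'| ≤ M) (hxε : |x - x'| ≤ ε) :
      |(x - x') * (y + y' + z + z' - x - x')| ≤ 6 * M * ε := by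
    have hlin : |y + y' + z + z' - x - x'| ≤ 6 * M := by
      rw [abs_le] at *
      constructor <;> linarith
    rw [abs_mul, mul_comm]
    exact mul_le_mul hlin hxε (abs_nonneg _) ((abs_nonneg _).trans hlin)
  have hpolar : heronForm a b c - heronForm a' b' c'
      = (a - a') * (b + b' + c + c' - a - a') + (b - b') * (c + c' + a + a' - b - b')
        + (c - c') * (a + a' + b + b' - c - c') := by
    simp only [heronForm]
    ring
  calc |heronForm a b c - heronForm a' b' c'|
      ≤ 6 * M * ε + 6 * M * ε + 6 * M * ε := by
        rw [hpolar]
        exact (abs_add_three _ _ _).trans (add_le_add_three (hterm ha hb hc ha' hb' hc' haε)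
          (hterm hb hc ha hb' hc' ha' hbε) (hterm hc ha hb hc' ha' hb' hcε))
    _ = 18 * M * ε := by ring

end HeronForm

section BoxIntegrals

lemma norm_setIntegral_pi_Ioo_le {ι E : Type*} [Fintype ι] [NormedAddCommGroup E]
    [NormedSpace ℝ E] {a b C : ℝ} (hab : a ≤ b) {f : (ι → ℝ) → E}
    (hf : ∀ x, (∀ i, x i ∈ Set.Ioo a b) → ‖f x‖ ≤ C) :
    ‖∫ x in Set.univ.pi fun _ => Set.Ioo a b, f x‖ ≤ C * (b - a) ^ Fintype.card ι := by
  have hvol : volume (Set.univ.pi fun _ : ι => Set.Ioo a b) < ⊤ := by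
    rw [Real.volume_pi_Ioo]
    exact ENNReal.prod_lt_top fun _ _ => ENNReal.ofReal_lt_top
  refine (norm_setIntegral_le_of_norm_le_const hvol fun x hx => hf x fun i => hx i trivial).trans_eq
    ?_
  rw [measureReal_def, Real.volume_pi_Ioo_toReal fun _ => hab, Finset.prod_const, Finset.card_univ]

lemma integrableOn_pi_Ioo_of_continuous {ι E : Type*} [Fintype ι] [NormedAddCommGroup E] {a b : ℝ}
    {f : (ι → ℝ) → E} (hf : Continuous f) :
    IntegrableOn f (Set.univ.pi fun _ => Set.Ioo a b) :=
  (hf.continuousOn.integrableOn_compact (isCompact_univ_pi fun _ => isCompact_Icc)).mono_set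
    (Set.pi_mono fun _ _ => Set.Ioo_subset_Icc_self)

lemma setIntegral_pi_fin_two {α E : Type*} [MeasureSpace α] [SigmaFinite (volume : Measure α)]
    [NormedAddCommGroup E] [NormedSpace ℝ E] {A : Set α} {f : α → α → E}
    (hf : IntegrableOn (fun x : Fin 2 → α => f (x 0) (x 1)) (Set.univ.pi fun _ => A)) :
    ∫ x : Fin 2 → α in Set.univ.pi fun _ => A, f (x 0) (x 1) = ∫ x in A, ∫ y in A, f x y := by
  have hmp := volume_preserving_finTwoArrow α
  have hemb := (MeasurableEquiv.finTwoArrow (α := α)).measurableEmbedding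
  have hpre : (Set.univ.pi fun _ : Fin 2 => A) = MeasurableEquiv.finTwoArrow ⁻¹' (A ×ˢ A) := by
    ext x
    simp [Set.mem_pi, Fin.forall_fin_two]
  rw [hpre] at hf ⊢
  rw [← setIntegral_prod (fun z : α × α => f z.1 z.2)
    ((hmp.integrableOn_comp_preimage hemb).mp hf)]
  exact hmp.setIntegral_preimage_emb hemb (fun z => f z.1 z.2) (A ×ˢ A)

lemma setIntegral_sub_pow {s : ℝ} (hs : 0 ≤ s) (n : ℕ) :
    ∫ x : Fin 2 → ℝ in Set.univ.pi fun _ => Set.Ioo 0 s, (x 0 - x 1) ^ n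
      = (1 + (-1) ^ n) * s ^ (n + 2) / ((n + 1) * (n + 2)) := by
  rw [setIntegral_pi_fin_two (f := fun x y : ℝ => (x - y) ^ n)
    (integrableOn_pi_Ioo_of_continuous (by fun_prop))]
  simp only [← integral_Ioc_eq_integral_Ioo, ← intervalIntegral.integral_of_le hs]
  have hinner (x : ℝ) : ∫ y in 0..s, (x - y) ^ n = (x ^ (n + 1) - (x - s) ^ (n + 1)) / (n + 1) := by
    rw [intervalIntegral.integral_comp_sub_left (fun t => t ^ n), integral_pow, sub_zero]
  have houter : ∫ x in 0..s, (x - s) ^ (n + 1) = (-1) ^ (n + 1) * s ^ (n + 2) / (n + 2) := by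
    rw [intervalIntegral.integral_comp_sub_right (fun t => t ^ (n + 1)), integral_pow, zero_sub,
      neg_pow s]
    push_cast
    ring
  simp only [hinner]
  rw [intervalIntegral.integral_div, intervalIntegral.integral_sub (by simp)
    (Continuous.intervalIntegrable (by fun_prop) _ _), houter, integral_pow]
  push_cast
  field_simp
  ring

end BoxIntegrals

section SineKernel

lemma sineKernel_eq_sinc (x y : ℝ) : sineKernel x y = sinc (π * (x - y)) := by
  simp only [sineKernel, sinc_apply, mul_eq_zero, pi_ne_zero, false_or, sub_eq_zero]

lemma sineKernel_self (x : ℝ) : sineKernel x x = 1 :=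
  if_pos rfl

lemma sineKernel_comm (x y : ℝ) : sineKernel x y = sineKernel y x := by
  rw [sineKernel_eq_sinc, sineKernel_eq_sinc, ← sinc_neg, ← mul_neg, neg_sub]

lemma continuous_sineKernel : Continuous fun p : ℝ × ℝ => sineKernel p.1 p.2 := by
  simp only [sineKernel_eq_sinc]
  exact continuous_sinc.comp (by fun_prop)

lemma abs_pi_mul_sub_le {s x y : ℝ} (hx : x ∈ Set.Ioo 0 s) (hy : y ∈ Set.Ioo 0 s) :
    |π * (x - y)| ≤ π * s := by
  rw [abs_mul, abs_of_pos pi_pos]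
  gcongr
  exact (abs_sub_lt_of_nonneg_of_lt hx.1.le hx.2 hy.1.le hy.2).le

lemma one_sub_sineKernel_mem_Icc {s x y : ℝ} (hx : x ∈ Set.Ioo 0 s) (hy : y ∈ Set.Ioo 0 s) :
    1 - sineKernel x y ∈ Set.Icc 0 ((π * s) ^ 2 / 6) := by
  rw [sineKernel_eq_sinc]
  refine ⟨one_sub_sinc_nonneg _, (one_sub_sinc_le _).trans ?_⟩
  rw [← sq_abs]
  gcongr
  exact abs_pi_mul_sub_le hx hy

/-- The principal minor `det[K(x_a,x_b)]` of the sine kernel at the points `x`. -/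
noncomputable def sineMinor {j : ℕ} (x : Fin j → ℝ) : ℝ :=
  Matrix.det (Matrix.of fun a b => sineKernel (x a) (x b))

lemma continuous_sineMinor (j : ℕ) : Continuous (sineMinor (j := j)) :=
  Continuous.matrix_det <| continuous_matrix fun a b =>
    continuous_sineKernel.comp (f := fun x : Fin j → ℝ => (x a, x b)) (by fun_prop)

lemma abs_sineMinor_succ_le {n : ℕ} {s : ℝ} {x : Fin (n + 1) → ℝ}
    (hx : ∀ i, x i ∈ Set.Ioo 0 s) :
    |sineMinor x| ≤ (n + 1).factorial * ((π * s) ^ 2 / 6) ^ n := by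
  rw [← Real.norm_eq_abs, sineMinor, ← one_mul (((π * s) ^ 2 / 6) ^ n)]
  refine norm_det_le_of_norm_row_sub_le (fun j => ?_) fun i j => ?_
  · simpa [sineKernel_eq_sinc] using abs_sinc_le_one _
  · have h0 := one_sub_sineKernel_mem_Icc (hx 0) (hx j)
    have hi := one_sub_sineKernel_mem_Icc (hx i.succ) (hx j)
    simp only [Matrix.of_apply, Real.norm_eq_abs, abs_le]
    constructor <;> linarith [h0.1, h0.2, hi.1, hi.2]

lemma sineMinor_fin_two (x : Fin 2 → ℝ) :
    sineMinor x = 1 - sinc (π * (x 0 - x 1)) ^ 2 := by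
  simp only [sineMinor, Matrix.det_fin_two, Matrix.of_apply, sineKernel_self,
    sineKernel_comm (x 1) (x 0)]
  rw [sineKernel_eq_sinc]
  ring

lemma sineMinor_fin_three (x : Fin 3 → ℝ) :
    sineMinor x = heronForm (1 - sineKernel (x 0) (x 1)) (1 - sineKernel (x 1) (x 2))
        (1 - sineKernel (x 0) (x 2))
      - 2 * ((1 - sineKernel (x 0) (x 1)) * (1 - sineKernel (x 1) (x 2))
        * (1 - sineKernel (x 0) (x 2))) := by
  rw [← det_fin_three_eq_heronForm, sineMinor]
  congr 1
  ext a b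
  fin_cases a <;> fin_cases b <;>
    simp [sineKernel_self, sineKernel_comm (x 1) (x 0), sineKernel_comm (x 2) (x 0),
      sineKernel_comm (x 2) (x 1)]

lemma abs_sineMinor_fin_three_le {s : ℝ} {x : Fin 3 → ℝ} (hx : ∀ i, x i ∈ Set.Ioo 0 s) :
    |sineMinor x| ≤ (π * s) ^ 6 / 20 := by
  let M := (π * s) ^ 2 / 6
  let t (i j : Fin 3) : ℝ := 1 / 6 * (π * (x i - x j)) ^ 2
  have habs (i j : Fin 3) : |1 - sineKernel (x i) (x j)| ≤ M := by
    have h := one_sub_sineKernel_mem_Icc (hx i) (hx j)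
    exact (abs_of_nonneg h.1).trans_le h.2
  have hquad (i j : Fin 3) : |t i j| ≤ M := by
    simp only [t]
    rw [abs_of_nonneg (by positivity), one_div_mul_eq_div, ← sq_abs]
    exact div_le_div_of_nonneg_right
      (pow_le_pow_left₀ (abs_nonneg _) (abs_pi_mul_sub_le (hx i) (hx j)) 2) (by norm_num)
  have herr (i j : Fin 3) : |1 - sineKernel (x i) (x j) - t i j| ≤ (π * s) ^ 4 / 120 := by
    simp only [t]
    rw [sineKernel_eq_sinc, one_div_mul_eq_div]
    refine (abs_one_sub_sinc_sub_le _).trans ?_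
    rw [← (by decide : Even 4).pow_abs]
    gcongr
    exact abs_pi_mul_sub_le (hx i) (hx j)
  have hdegenerate : heronForm (t 0 1) (t 1 2) (t 0 2) = 0 := by
    rw [← heronForm_mul_sq_add (1 / 6) (π * (x 0 - x 1)) (π * (x 1 - x 2))]
    congr 3
    ring
  have hform := abs_heronForm_sub_le (habs 0 1) (habs 1 2) (habs 0 2) (hquad 0 1) (hquad 1 2)
    (hquad 0 2) (herr 0 1) (herr 1 2) (herr 0 2)
  rw [hdegenerate, sub_zero] at hform
  have hcubic : |2 * ((1 - sineKernel (x 0) (x 1)) * (1 - sineKernel (x 1) (x 2))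
      * (1 - sineKernel (x 0) (x 2)))| ≤ 2 * (M * M * M) := by
    rw [abs_mul, abs_mul, abs_mul, abs_two]
    gcongr <;> apply habs
  calc |sineMinor x| ≤ 18 * M * ((π * s) ^ 4 / 120) + 2 * (M * M * M) := by
        rw [sineMinor_fin_three]
        exact (abs_sub _ _).trans (add_le_add hform hcubic)
    _ = 37 / 1080 * (π * s) ^ 6 := by
        simp only [M]
        ring
    _ ≤ (π * s) ^ 6 / 20 := by linarith [show 0 ≤ (π * s) ^ 6 by positivity]

end SineKernel

section FredholmSeries

/-- The integral `∫_{(0,s)^j} det[K(x_a,x_b)] dx₁⋯dx_j`, which multiplies `(-ξ)^j/j!` in the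
Fredholm series. -/
noncomputable def sineMinorIntegral (j : ℕ) (s : ℝ) : ℝ :=
  ∫ x : Fin j → ℝ in Set.univ.pi (fun _ => Set.Ioo 0 s), sineMinor x

lemma sineFredholmDet_eq_tsum (ξ s : ℝ) :
    sineFredholmDet ξ s = ∑' j : ℕ, (-ξ) ^ j / j.factorial * sineMinorIntegral j s :=
  rfl

lemma sineMinorIntegral_zero (s : ℝ) : sineMinorIntegral 0 s = 1 := by
  simp [sineMinorIntegral, sineMinor, measureReal_def, Real.volume_pi_Ioo]

lemma sineMinorIntegral_one {s : ℝ} (hs : 0 ≤ s) : sineMinorIntegral 1 s = s := by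
  simp [sineMinorIntegral, sineMinor, sineKernel_self, measureReal_def, Real.volume_pi_Ioo, hs]

lemma setIntegral_fin_two_one_sub_sinc_sq_approx {s : ℝ} (hs : 0 ≤ s) :
    ∫ x : Fin 2 → ℝ in Set.univ.pi fun _ => Set.Ioo 0 s,
        ((π * (x 0 - x 1)) ^ 2 / 3 - 2 * (π * (x 0 - x 1)) ^ 4 / 45)
      = π ^ 2 / 18 * s ^ 4 - 2 * π ^ 4 / 675 * s ^ 6 := by
  calc ∫ x : Fin 2 → ℝ in Set.univ.pi fun _ => Set.Ioo 0 s,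
        ((π * (x 0 - x 1)) ^ 2 / 3 - 2 * (π * (x 0 - x 1)) ^ 4 / 45)
      = ∫ x : Fin 2 → ℝ in Set.univ.pi fun _ => Set.Ioo 0 s,
        (π ^ 2 / 3 * (x 0 - x 1) ^ 2 - 2 * π ^ 4 / 45 * (x 0 - x 1) ^ 4) := by
        congr 1 with x
        ring
    _ = π ^ 2 / 18 * s ^ 4 - 2 * π ^ 4 / 675 * s ^ 6 := by
        rw [integral_sub (integrableOn_pi_Ioo_of_continuous (by fun_prop))
          (integrableOn_pi_Ioo_of_continuous (by fun_prop)), integral_const_mul,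
          integral_const_mul, setIntegral_sub_pow hs, setIntegral_sub_pow hs]
        push_cast
        ring

lemma abs_sineMinorIntegral_two_sub_le {s : ℝ} (hs : 0 ≤ s) :
    |sineMinorIntegral 2 s - (π ^ 2 / 18 * s ^ 4 - 2 * π ^ 4 / 675 * s ^ 6)|
      ≤ π ^ 6 / 315 * s ^ 8 := by
  rw [← Real.norm_eq_abs, ← setIntegral_fin_two_one_sub_sinc_sq_approx hs, sineMinorIntegral,
    ← integral_sub (integrableOn_pi_Ioo_of_continuous (continuous_sineMinor 2))
    (integrableOn_pi_Ioo_of_continuous (by fun_prop))]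
  refine (norm_setIntegral_pi_Ioo_le (C := (π * s) ^ 6 / 315) hs fun x hx => ?_).trans_eq ?_
  · rw [sineMinor_fin_two]
    refine (abs_one_sub_sinc_sq_sub_le _).trans ?_
    rw [← (by decide : Even 6).pow_abs]
    gcongr
    exact abs_pi_mul_sub_le (hx 0) (hx 1)
  · rw [Fintype.card_fin]
    ring

lemma abs_sineMinorIntegral_three_le {s : ℝ} (hs : 0 ≤ s) :
    |sineMinorIntegral 3 s| ≤ π ^ 6 / 20 * s ^ 9 := by
  refine (norm_setIntegral_pi_Ioo_le (f := sineMinor) hs fun x hx =>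
    abs_sineMinor_fin_three_le hx).trans_eq ?_
  rw [Fintype.card_fin]
  ring

lemma abs_sineMinorIntegral_succ_le {s : ℝ} (hs : 0 ≤ s) (n : ℕ) :
    |sineMinorIntegral (n + 1) s| ≤ (n + 1).factorial * ((π * s) ^ 2 / 6) ^ n * s ^ (n + 1) := by
  simpa only [sineMinorIntegral, Fintype.card_fin, sub_zero, Real.norm_eq_abs] using
    norm_setIntegral_pi_Ioo_le (f := sineMinor) hs fun x hx => abs_sineMinor_succ_le hx

theorem abs_sum_sub_sineFredholmDet_le {ξ s : ℝ} (hs : 0 ≤ s)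
    (hr : |ξ| * (π ^ 2 / 6) * s ^ 3 < 1) (m : ℕ) :
    |∑ j ∈ Finset.range (m + 1), (-ξ) ^ j / j.factorial * sineMinorIntegral j s
        - sineFredholmDet ξ s|
      ≤ |ξ| * s * (|ξ| * (π ^ 2 / 6) * s ^ 3) ^ m / (1 - |ξ| * (π ^ 2 / 6) * s ^ 3) := by
  set r := |ξ| * (π ^ 2 / 6) * s ^ 3
  let F (j : ℕ) : ℝ := (-ξ) ^ j / j.factorial * sineMinorIntegral j s
  have hterm (n : ℕ) : ‖F (n + 1)‖ ≤ |ξ| * s * r ^ n :=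
    calc ‖F (n + 1)‖
        = |ξ| ^ (n + 1) / (n + 1).factorial * |sineMinorIntegral (n + 1) s| := by
          simp [F]
      _ ≤ |ξ| ^ (n + 1) / (n + 1).factorial
            * ((n + 1).factorial * ((π * s) ^ 2 / 6) ^ n * s ^ (n + 1)) := by
          gcongr
          exact abs_sineMinorIntegral_succ_le hs n
      _ = |ξ| * s * r ^ n := by
          field_simp
          ring
  have hsummable : Summable F := (summable_nat_add_iff 1).mp <|
    .of_norm_bounded ((summable_geometric_of_lt_one (by positivity) hr).mul_left _) hterm
  have htail : HasSum (fun n => F (n + 1)) (sineFredholmDet ξ s - F 0) := by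
    simpa [sineFredholmDet_eq_tsum, F] using (hasSum_nat_add_iff' 1).mpr hsummable.hasSum
  have h := norm_sub_le_of_geometric_bound_of_hasSum hr hterm htail m
  rwa [← sub_add, sub_add_eq_add_sub, ← Finset.sum_range_succ'] at h

theorem sineFredholmDet_sub_sum_isBigO (ξ : ℝ) (m : ℕ) :
    (fun s => sineFredholmDet ξ s
        - ∑ j ∈ Finset.range (m + 1), (-ξ) ^ j / j.factorial * sineMinorIntegral j s)
      =O[𝓝[>] 0] fun s => s ^ (3 * m + 1) := by
  have hsmall : ∀ᶠ s : ℝ in 𝓝[>] 0, |ξ| * (π ^ 2 / 6) * s ^ 3 < 1 / 2 := by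
    have hcont : Continuous fun s : ℝ => |ξ| * (π ^ 2 / 6) * s ^ 3 := by fun_prop
    exact nhdsWithin_le_nhds (hcont.tendsto 0 |>.eventually_lt_const (by simp))
  refine .of_bound (2 * (|ξ| * (|ξ| * (π ^ 2 / 6)) ^ m)) ?_
  filter_upwards [hsmall, self_mem_nhdsWithin] with s hr hs
  have hs0 : 0 ≤ s := (Set.mem_Ioi.mp hs).le
  rw [norm_sub_rev, Real.norm_eq_abs, Real.norm_of_nonneg (by positivity)]
  refine (abs_sum_sub_sineFredholmDet_le hs0 (by linarith) m).trans ?_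
  rw [div_le_iff₀ (by linarith)]
  calc |ξ| * s * (|ξ| * (π ^ 2 / 6) * s ^ 3) ^ m
      = 2 * (|ξ| * (|ξ| * (π ^ 2 / 6)) ^ m) * s ^ (3 * m + 1) * (1 / 2) := by ring
    _ ≤ _ := by
      gcongr
      linarith

lemma sineMinorIntegral_two_sub_isBigO :
    (fun s => sineMinorIntegral 2 s - (π ^ 2 / 18 * s ^ 4 - 2 * π ^ 4 / 675 * s ^ 6))
      =O[𝓝[>] 0] fun s => s ^ 8 :=
  .of_bound (π ^ 6 / 315) <| eventually_mem_nhdsWithin.mono fun s hs => by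
    simpa only [Real.norm_eq_abs, (by decide : Even 8).pow_abs, abs_pow] using
      abs_sineMinorIntegral_two_sub_le (Set.mem_Ioi.mp hs).le

lemma sineMinorIntegral_three_isBigO : sineMinorIntegral 3 =O[𝓝[>] 0] fun s => s ^ 9 :=
  .of_bound (π ^ 6 / 20) <| eventually_mem_nhdsWithin.mono fun s hs => by
    simpa only [Real.norm_eq_abs, abs_pow, abs_of_pos (Set.mem_Ioi.mp hs)] using
      abs_sineMinorIntegral_three_le (Set.mem_Ioi.mp hs).le

end FredholmSeries

/-- Small-`s` expansion of the sine-kernel Fredholm determinant: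
`det(I − ξ𝕂ₛ) = 1 − ξs + (ξ²π²/36)s⁴ − (ξ²π⁴/675)s⁶ + O(s⁸)` as `s → 0⁺`, for fixed `ξ`. -/
theorem sineFredholmDet_small_s (ξ : ℝ) :
    (fun s : ℝ => sineFredholmDet ξ s
        - (1 - ξ * s + (ξ ^ 2 * Real.pi ^ 2 / 36) * s ^ 4
            - (ξ ^ 2 * Real.pi ^ 4 / 675) * s ^ 6))
      =O[𝓝[>] 0] (fun s : ℝ => s ^ 8) := by
  have hpow {m : ℕ} (hm : 8 < m) :
      (fun s : ℝ => s ^ m) =O[𝓝[>] 0] fun s => s ^ 8 :=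
    (isLittleO_pow_pow hm).isBigO.mono nhdsWithin_le_nhds
  have htail := (sineFredholmDet_sub_sum_isBigO ξ 3).trans (hpow (by norm_num))
  have htwo := sineMinorIntegral_two_sub_isBigO.const_mul_left (ξ ^ 2 / 2)
  have hthree := (sineMinorIntegral_three_isBigO.trans (hpow (by norm_num))).const_mul_left
    (ξ ^ 3 / 6)
  refine ((htail.add htwo).sub hthree).congr' ?_ .rfl
  filter_upwards [self_mem_nhdsWithin] with s hs
  simp only [Finset.sum_range_succ, Finset.sum_range_zero, sineMinorIntegral_zero,
    sineMinorIntegral_one (Set.mem_Ioi.mp hs).le, Nat.factorial]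
  push_cast
  ring
end

section
/- For every positive integer N and real s with 0 < s < N, the probability density obeys the exact small-s expansion det(I − ξ𝕂ˢ_N) = 1 − ξs + ((1 − 1/N²)ξ²π²/36)s⁴ + O(s⁵), where 𝕂ˢ_N has kernel sin(π(x−y))/(N sin(π(x−y)/N)). -/
open Real Filter Asymptotics MeasureTheory
open scoped Topology

/-- The finite-`N` CUE kernel `K_N(x,y) = sin(π(x−y))/(N sin(π(x−y)/N))`, with value `1`
on the diagonal. -/
noncomputable def cueKernel (N : ℕ) (x y : ℝ) : ℝ :=
  if x = y then 1
  else Real.sin (Real.pi * (x - y)) / (N * Real.sin (Real.pi * (x - y) / N))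

/-- The Fredholm determinant `det(I − ξ𝕂ˢ_N)` of the kernel `K_N` on `(0,s)`, via the
Fredholm series `∑_{j≥0} ((−ξ)^j/j!) ∫_{(0,s)^j} det[K_N(x_a,x_b)] dx`. -/
noncomputable def cueFredholmDet (N : ℕ) (ξ s : ℝ) : ℝ :=
  ∑' j : ℕ, ((-ξ) ^ j / (Nat.factorial j : ℝ)) *
    ∫ x : Fin j → ℝ in Set.univ.pi (fun _ => Set.Ioo 0 s),
      Matrix.det (Matrix.of fun a b => cueKernel N (x a) (x b))

/-!
Near the diagonal the kernel is `1 - a(x-y)² + O(|x-y|³)`, so on `(0,s)` every minor is a small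
perturbation of the determinant of the all-ones matrix. Subtracting one row from the others bounds
the minor of order `j` by `j! · O(s)^(j-1)`, hence the `j`-th term of the Fredholm series by
`O(s)^(2j-1)`, and only `j ≤ 2` matters up to `O(s⁵)`. The one-point term is `-ξs`, and the
two-point term is `ξ²/2 · ∫∫ 2a(x-y)² = aξ²s⁴/6` up to `O(s⁵)`. For the CUE kernel, the Taylor
expansion of `sin` gives `a = π²(1 - 1/N²)/6`.
-/

open Finset in
theorem abv_det_le_factorial_nsmul_prod {R S n : Type*} [CommRing R] [Nontrivial R] [CommRing S]
    [LinearOrder S] [IsStrictOrderedRing S] [Fintype n] [DecidableEq n] {abv : AbsoluteValue R S}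
    {A : Matrix n n R} {c : n → S} (hA : ∀ i j, abv (A i j) ≤ c i) :
    abv A.det ≤ (Fintype.card n).factorial • ∏ i, c i := by
  calc
    abv A.det ≤ ∑ σ : Equiv.Perm n, abv (Equiv.Perm.sign σ • ∏ i, A (σ i) i) := by
      rw [Matrix.det_apply]
      exact abv.sum_le _ _
    _ = ∑ σ : Equiv.Perm n, ∏ i, abv (A (σ i) i) :=
      sum_congr rfl fun σ _ => by rw [abv.map_units_int_smul, abv.map_prod]
    _ ≤ ∑ σ : Equiv.Perm n, ∏ i, c (σ i) := by gcongr; exact hA _ _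
    _ = (Fintype.card n).factorial • ∏ i, c i := by
      simp only [fun σ : Equiv.Perm n => Equiv.prod_comp σ c, sum_const, card_univ,
        Fintype.card_perm]

open Finset in
theorem abv_det_le_of_abv_sub_one_le {R S n : Type*} [CommRing R] [Nontrivial R] [CommRing S]
    [LinearOrder S] [IsStrictOrderedRing S] [Fintype n] [DecidableEq n] [Nonempty n]
    {abv : AbsoluteValue R S} {A : Matrix n n R} {ε : S} (hA : ∀ i j, abv (A i j - 1) ≤ ε) :
    abv A.det ≤ (Fintype.card n).factorial • ((1 + ε) * (2 * ε) ^ (Fintype.card n - 1)) := by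
  obtain ⟨k⟩ := ‹Nonempty n›
  -- Subtracting row `k` from every other row makes those rows of size `2 * ε`.
  let B : Matrix n n R := Matrix.of fun i j => if i = k then A k j else A i j - A k j
  have det_eq : A.det = B.det :=
    Matrix.det_eq_of_forall_row_eq_smul_add_const (fun i => if i = k then 0 else 1) k (if_pos rfl)
      fun i j => by by_cases hi : i = k <;> simp [B, hi]
  have entry_le (i j : n) : abv (B i j) ≤ if i = k then 1 + ε else 2 * ε := by
    by_cases hi : i = k
    · calc
        abv (B i j) = abv (1 + (A k j - 1)) := by simp [B, hi]
        _ ≤ abv 1 + abv (A k j - 1) := abv.add_le _ _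
        _ ≤ 1 + ε := by rw [abv.map_one]; gcongr; exact hA k j
        _ = if i = k then 1 + ε else 2 * ε := (if_pos hi).symm
    · calc
        abv (B i j) = abv ((A i j - 1) - (A k j - 1)) := by simp [B, hi]
        _ ≤ abv (A i j - 1) + abv (A k j - 1) := by
          simpa only [sub_zero, zero_sub, abv.map_neg] using abv.sub_le (A i j - 1) 0 (A k j - 1)
        _ ≤ 2 * ε := by rw [two_mul]; exact add_le_add (hA i j) (hA k j)
        _ = if i = k then 1 + ε else 2 * ε := (if_neg hi).symm
  have prod_eq : ∏ i, (if i = k then 1 + ε else 2 * ε)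
      = (1 + ε) * (2 * ε) ^ (Fintype.card n - 1) := by
    rw [← mul_prod_erase univ _ (mem_univ k), if_pos rfl,
      prod_congr rfl fun i hi => if_neg (ne_of_mem_erase hi), prod_const,
      card_erase_of_mem (mem_univ k), card_univ]
  rw [det_eq, ← prod_eq]
  exact abv_det_le_factorial_nsmul_prod entry_le

section Fredholm

variable {α : Type*} [MeasureSpace α]

/-- The integral over `S^j` of the minor `det[K(x_a,x_b)]` of order `j`: up to the factor
`(-ξ)^j/j!`, the `j`-th term of the Fredholm series of `K` restricted to `S`. -/
noncomputable def minorIntegral (K : α → α → ℝ) (S : Set α) (j : ℕ) : ℝ :=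
  ∫ x : Fin j → α in Set.univ.pi fun _ => S, (Matrix.of fun a b => K (x a) (x b)).det

/-- The Fredholm determinant `det(I - ξK)` of the kernel `K` on `S`, as the sum of its Fredholm
series (the junk value `0` if the series diverges). -/
noncomputable def fredholmDet (K : α → α → ℝ) (S : Set α) (ξ : ℝ) : ℝ :=
  ∑' j : ℕ, (-ξ) ^ j / (j.factorial : ℝ) * minorIntegral K S j

/-- The minor `det[K(x_a,x_b)]` of order two at a pair of points, written out: the integrand of the
two-point term of the Fredholm series. -/
def pairMinor (K : α → α → ℝ) (p : α × α) : ℝ :=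
  K p.1 p.1 * K p.2 p.2 - K p.1 p.2 * K p.2 p.1

theorem minorIntegral_zero (K : α → α → ℝ) (S : Set α) : minorIntegral K S 0 = 1 := by
  simp [minorIntegral, volume_pi, Measure.real]

theorem minorIntegral_one (K : α → α → ℝ) (S : Set α) :
    minorIntegral K S 1 = ∫ x in S, K x x := by
  have preimage_eq : MeasurableEquiv.funUnique (Fin 1) α ⁻¹' S = Set.univ.pi fun _ => S := by
    ext x; simp [Set.mem_pi]
  have transfer := (volume_preserving_funUnique (Fin 1) α).setIntegral_preimage_emb
    (MeasurableEquiv.measurableEmbedding _) (fun x => K x x) S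
  rw [preimage_eq] at transfer
  simp only [minorIntegral, Matrix.det_unique]
  exact transfer

variable [SigmaFinite (volume : Measure α)]

theorem minorIntegral_two (K : α → α → ℝ) (S : Set α) :
    minorIntegral K S 2 = ∫ p in S ×ˢ S, pairMinor K p := by
  have preimage_eq : MeasurableEquiv.finTwoArrow ⁻¹' (S ×ˢ S) = Set.univ.pi fun _ => S := by
    ext x; simp [Set.mem_pi, MeasurableEquiv.finTwoArrow]
  rw [minorIntegral, ← preimage_eq, ← (volume_preserving_finTwoArrow α).setIntegral_preimage_emb
    (MeasurableEquiv.measurableEmbedding _)]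
  simp [pairMinor, Matrix.det_fin_two, MeasurableEquiv.finTwoArrow]

theorem abs_minorIntegral_succ_le {K : α → α → ℝ} {S : Set α} {ε : ℝ} (hS : volume S ≠ ⊤)
    (hK : ∀ x ∈ S, ∀ y ∈ S, |K x y - 1| ≤ ε) (j : ℕ) :
    |minorIntegral K S (j + 1)|
      ≤ (j + 1).factorial * ((1 + ε) * (2 * ε) ^ j) * volume.real S ^ (j + 1) := by
  have vol_cube : (volume : Measure (Fin (j + 1) → α)) (Set.univ.pi fun _ => S)
      = volume S ^ (j + 1) := by simp [volume_pi_pi]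
  have vol_cube_lt_top : (volume : Measure (Fin (j + 1) → α)) (Set.univ.pi fun _ => S) < ⊤ :=
    vol_cube ▸ ENNReal.pow_lt_top hS.lt_top
  have det_le : ∀ x ∈ Set.univ.pi (fun _ : Fin (j + 1) => S),
      ‖(Matrix.of fun a b => K (x a) (x b)).det‖
        ≤ (j + 1).factorial * ((1 + ε) * (2 * ε) ^ j) := fun x hx => by
    simpa [Real.norm_eq_abs] using abv_det_le_of_abv_sub_one_le (abv := AbsoluteValue.abs)
      (A := Matrix.of fun a b => K (x a) (x b)) fun a b => hK _ (hx a trivial) _ (hx b trivial)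
  calc
    |minorIntegral K S (j + 1)|
      ≤ (j + 1).factorial * ((1 + ε) * (2 * ε) ^ j)
        * (volume : Measure (Fin (j + 1) → α)).real (Set.univ.pi fun _ => S) :=
      norm_setIntegral_le_of_norm_le_const vol_cube_lt_top det_le
    _ = (j + 1).factorial * ((1 + ε) * (2 * ε) ^ j) * volume.real S ^ (j + 1) := by
      rw [measureReal_def, vol_cube, ENNReal.toReal_pow, measureReal_def]

theorem abs_fredholmDet_sub_sum_le {K : α → α → ℝ} {S : Set α} {ε ξ : ℝ} (hS : volume S ≠ ⊤)
    (hε : 0 ≤ ε) (hK : ∀ x ∈ S, ∀ y ∈ S, |K x y - 1| ≤ ε)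
    (hr : 2 * ε * (|ξ| * volume.real S) < 1) (n : ℕ) :
    |fredholmDet K S ξ - ∑ j ∈ Finset.range (n + 1), (-ξ) ^ j / j.factorial * minorIntegral K S j|
      ≤ |ξ| * volume.real S * (1 + ε) * (2 * ε * (|ξ| * volume.real S)) ^ n
        * (1 - 2 * ε * (|ξ| * volume.real S))⁻¹ := by
  set v := volume.real S
  set r := 2 * ε * (|ξ| * v)
  let term (j : ℕ) : ℝ := (-ξ) ^ j / j.factorial * minorIntegral K S j
  have term_le (j : ℕ) : ‖term (j + (n + 1))‖ ≤ |ξ| * v * (1 + ε) * r ^ n * r ^ j := by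
    rw [Real.norm_eq_abs, abs_mul, abs_div, abs_pow, abs_neg, Nat.abs_cast, ← add_assoc]
    calc
      |ξ| ^ (j + n + 1) / (j + n + 1).factorial * |minorIntegral K S (j + n + 1)|
        ≤ |ξ| ^ (j + n + 1) / (j + n + 1).factorial *
          ((j + n + 1).factorial * ((1 + ε) * (2 * ε) ^ (j + n)) * v ^ (j + n + 1)) := by
        gcongr; exact abs_minorIntegral_succ_le hS hK _
      _ = |ξ| ^ (j + n + 1) * ((1 + ε) * (2 * ε) ^ (j + n)) * v ^ (j + n + 1) := by
        have := Nat.cast_ne_zero (R := ℝ).mpr (j + n + 1).factorial_ne_zero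
        field_simp
      _ = |ξ| * v * (1 + ε) * r ^ n * r ^ j := by simp only [r, mul_pow]; ring
  have geometric : HasSum (fun j => |ξ| * v * (1 + ε) * r ^ n * r ^ j)
      (|ξ| * v * (1 + ε) * r ^ n * (1 - r)⁻¹) :=
    (hasSum_geometric_of_lt_one (by positivity) hr).mul_left _
  have summable : Summable term :=
    (summable_nat_add_iff (n + 1)).mp (.of_norm_bounded geometric.summable term_le)
  have tail_eq : fredholmDet K S ξ - ∑ j ∈ Finset.range (n + 1), term j
      = ∑' j, term (j + (n + 1)) :=
    sub_eq_of_eq_add' (summable.sum_add_tsum_nat_add (n + 1)).symm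
  rw [tail_eq]
  exact tsum_of_norm_bounded geometric term_le

end Fredholm

section SmallSquare

theorem norm_le_of_mem_Ioo_prod_Ioo {s : ℝ} {p : ℝ × ℝ} (hp : p ∈ Set.Ioo 0 s ×ˢ Set.Ioo 0 s) :
    ‖p‖ ≤ s :=
  norm_prod_le_iff.mpr
    ⟨abs_le.mpr ⟨by linarith [hp.1.1, hp.1.2], hp.1.2.le⟩,
      abs_le.mpr ⟨by linarith [hp.2.1, hp.2.2], hp.2.2.le⟩⟩

theorem tendsto_Ioo_prod_Ioo_smallSets :
    Tendsto (fun s : ℝ => Set.Ioo 0 s ×ˢ Set.Ioo 0 s) (𝓝[>] 0) (𝓝 (0 : ℝ × ℝ)).smallSets :=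
  ((tendsto_closedBall_smallSets 0).mono_left nhdsWithin_le_nhds).smallSets_mono <|
    .of_forall fun _ _ hp => mem_closedBall_zero_iff.mpr (norm_le_of_mem_Ioo_prod_Ioo hp)

theorem eventually_forall_mem_Ioo_prod_Ioo {P : ℝ × ℝ → Prop} (hP : ∀ᶠ p in 𝓝 0, P p) :
    ∀ᶠ s : ℝ in 𝓝[>] 0, ∀ p ∈ Set.Ioo 0 s ×ˢ Set.Ioo 0 s, P p :=
  tendsto_smallSets_iff.mp tendsto_Ioo_prod_Ioo_smallSets {p | P p} hP

theorem isBigO_setIntegral_Ioo_prod_Ioo {E : Type*} [NormedAddCommGroup E] [NormedSpace ℝ E]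
    {F : ℝ × ℝ → E} {n : ℕ} (hF : F =O[𝓝 0] fun p => ‖p‖ ^ n) :
    (fun s : ℝ => ∫ p in Set.Ioo 0 s ×ˢ Set.Ioo 0 s, F p) =O[𝓝[>] 0] fun s => s ^ (n + 2) := by
  obtain ⟨C, hC, hFC⟩ := hF.exists_nonneg
  refine .of_bound C ?_
  filter_upwards [eventually_forall_mem_Ioo_prod_Ioo hFC.bound, self_mem_nhdsWithin]
    with s hFs (hs : 0 < s)
  have vol_square : volume (Set.Ioo 0 s ×ˢ Set.Ioo 0 s) = ENNReal.ofReal s ^ 2 := by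
    rw [Measure.volume_eq_prod, Measure.prod_prod, Real.volume_Ioo, sub_zero, sq]
  calc
    ‖∫ p in Set.Ioo 0 s ×ˢ Set.Ioo 0 s, F p‖
      ≤ C * s ^ n * volume.real (Set.Ioo 0 s ×ˢ Set.Ioo 0 s) := by
      refine norm_setIntegral_le_of_norm_le_const
        (vol_square ▸ ENNReal.pow_lt_top ENNReal.ofReal_lt_top) fun p hp => (hFs p hp).trans ?_
      rw [norm_pow, norm_norm]
      gcongr
      exact norm_le_of_mem_Ioo_prod_Ioo hp
    _ = C * ‖s ^ (n + 2)‖ := by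
      rw [measureReal_def, vol_square, ENNReal.toReal_pow, ENNReal.toReal_ofReal hs.le,
        Real.norm_of_nonneg (by positivity)]
      ring

theorem integrableOn_Ioo_prod_Ioo_sub_sq (s : ℝ) :
    IntegrableOn (fun p : ℝ × ℝ => (p.1 - p.2) ^ 2) (Set.Ioo 0 s ×ˢ Set.Ioo 0 s) :=
  (ContinuousOn.integrableOn_compact (isCompact_Icc.prod isCompact_Icc) (by fun_prop)).mono_set
    (Set.prod_mono Set.Ioo_subset_Icc_self Set.Ioo_subset_Icc_self)

theorem setIntegral_Ioo_prod_Ioo_sub_sq {s : ℝ} (hs : 0 ≤ s) :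
    ∫ p in Set.Ioo 0 s ×ˢ Set.Ioo 0 s, (p.1 - p.2) ^ 2 = s ^ 4 / 6 := by
  have inner (x : ℝ) : ∫ y in 0..s, (x - y) ^ 2 = x ^ 3 / 3 - (x - s) ^ 3 / 3 := by
    rw [intervalIntegral.integral_comp_sub_left (fun u => u ^ 2) x, integral_pow]
    norm_num
    ring
  calc
    ∫ p in Set.Ioo 0 s ×ˢ Set.Ioo 0 s, (p.1 - p.2) ^ 2
      = ∫ x in 0..s, ∫ y in 0..s, (x - y) ^ 2 := by
      rw [Measure.volume_eq_prod, setIntegral_prod _ (integrableOn_Ioo_prod_Ioo_sub_sq s)]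
      simp only [← integral_Ioc_eq_integral_Ioo, ← intervalIntegral.integral_of_le hs]
    _ = (∫ x in 0..s, x ^ 3 / 3) - ∫ x in 0..s, (x - s) ^ 3 / 3 := by
      simp only [inner]
      exact intervalIntegral.integral_sub (Continuous.intervalIntegrable (by fun_prop) _ _)
        (Continuous.intervalIntegrable (by fun_prop) _ _)
    _ = s ^ 4 / 6 := by
      rw [intervalIntegral.integral_comp_sub_right (fun u => u ^ 3 / 3) s,
        intervalIntegral.integral_div, intervalIntegral.integral_div, integral_pow, integral_pow]
      norm_num
      ring

end SmallSquare

section KernelExpansion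

variable {K : ℝ → ℝ → ℝ} {a : ℝ}

theorem fredholmDet_Ioo_sub_sum_isBigO (hK : (fun p : ℝ × ℝ => K p.1 p.2 - 1) =O[𝓝 0] norm)
    (ξ : ℝ) (n : ℕ) :
    (fun s : ℝ => fredholmDet K (Set.Ioo 0 s) ξ
        - ∑ j ∈ Finset.range (n + 1), (-ξ) ^ j / j.factorial * minorIntegral K (Set.Ioo 0 s) j)
      =O[𝓝[>] 0] fun s => s ^ (2 * n + 1) := by
  obtain ⟨C, hC, hKC⟩ := hK.exists_nonneg
  have eventually_lt {f : ℝ → ℝ} (hf : Continuous f) (hf0 : f 0 = 0) {b : ℝ} (hb : 0 < b) :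
      ∀ᶠ s in 𝓝[>] 0, f s < b :=
    nhdsWithin_le_nhds (hf.continuousAt.eventually_lt continuousAt_const (hf0.trans_lt hb))
  refine .of_bound (4 * |ξ| * (2 * C * |ξ|) ^ n) ?_
  filter_upwards [eventually_forall_mem_Ioo_prod_Ioo hKC.bound, self_mem_nhdsWithin,
    eventually_lt (f := fun s => C * s) (by fun_prop) (by simp) one_pos,
    eventually_lt (f := fun s => 2 * (C * s) * (|ξ| * s)) (by fun_prop) (by simp) one_half_pos]
    with s hKs (hs : 0 < s) hCs hrs
  have kernel_near_one : ∀ x ∈ Set.Ioo 0 s, ∀ y ∈ Set.Ioo 0 s, |K x y - 1| ≤ C * s :=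
    fun x hx y hy => (hKs (x, y) ⟨hx, hy⟩).trans <| by
      rw [norm_norm]; gcongr; exact norm_le_of_mem_Ioo_prod_Ioo ⟨hx, hy⟩
  have vol_eq : volume.real (Set.Ioo 0 s) = s := by
    rw [Real.volume_real_Ioo_of_le hs.le, sub_zero]
  have tail_le := abs_fredholmDet_sub_sum_le (ξ := ξ) measure_Ioo_lt_top.ne (by positivity)
    kernel_near_one (by rw [vol_eq]; linarith) n
  rw [vol_eq] at tail_le
  have inv_pos : 0 < (1 - 2 * (C * s) * (|ξ| * s))⁻¹ := inv_pos.mpr (by linarith)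
  have inv_le : (1 - 2 * (C * s) * (|ξ| * s))⁻¹ ≤ 2 :=
    inv_le_of_inv_le₀ two_pos (by linarith)
  calc
    _ ≤ |ξ| * s * (1 + C * s) * (2 * (C * s) * (|ξ| * s)) ^ n
        * (1 - 2 * (C * s) * (|ξ| * s))⁻¹ := tail_le
    _ ≤ |ξ| * s * 2 * (2 * (C * s) * (|ξ| * s)) ^ n * 2 := by
      gcongr
      linarith
    _ = 4 * |ξ| * (2 * C * |ξ|) ^ n * ‖s ^ (2 * n + 1)‖ := by
      rw [Real.norm_of_nonneg (by positivity)]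
      simp only [mul_pow, pow_succ, pow_mul]
      ring

/-- The kernel `K` is equal to `1 - a(x-y)² + O(|x-y|³)` near the origin, which determines its
Fredholm determinant on `(0,s)` up to `O(s⁵)`. The error term vanishes on the diagonal, so this
includes `K(x,x) = 1` for small `x`. -/
def HasDiagonalExpansion (K : ℝ → ℝ → ℝ) (a : ℝ) : Prop :=
  (fun p : ℝ × ℝ => K p.1 p.2 - (1 - a * (p.1 - p.2) ^ 2)) =O[𝓝 0] fun p => (p.1 - p.2) ^ 3

theorem tendsto_fst_sub_snd : Tendsto (fun p : ℝ × ℝ => p.1 - p.2) (𝓝 0) (𝓝 0) :=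
  Continuous.tendsto' (by fun_prop) _ _ (sub_self 0)

theorem fst_sub_snd_isBigO_norm : (fun p : ℝ × ℝ => p.1 - p.2) =O[𝓝 0] norm :=
  (isBigO_fst_prod'.sub isBigO_snd_prod').norm_right

namespace HasDiagonalExpansion

theorem sub_one_isBigO_norm (hK : HasDiagonalExpansion K a) :
    (fun p : ℝ × ℝ => K p.1 p.2 - 1) =O[𝓝 0] norm := by
  have higher_power {m : ℕ} (hm : 1 < m) : (fun p : ℝ × ℝ => (p.1 - p.2) ^ m) =O[𝓝 0] norm :=
    ((isLittleO_pow_id hm).comp_tendsto tendsto_fst_sub_snd).isBigO.trans fst_sub_snd_isBigO_norm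
  refine ((hK.trans (higher_power (by norm_num))).sub
    ((higher_power one_lt_two).const_mul_left a)).congr_left fun p => ?_
  ring

theorem isBigO_one (hK : HasDiagonalExpansion K a) :
    (fun p : ℝ × ℝ => K p.1 p.2) =O[𝓝 0] fun _ => (1 : ℝ) :=
  ((hK.sub_one_isBigO_norm.trans (continuous_norm.continuousAt.isBigO_one ℝ)).add
    (isBigO_refl (fun _ => (1 : ℝ)) _)).congr_left fun _ => sub_add_cancel _ _

theorem swap (hK : HasDiagonalExpansion K a) : HasDiagonalExpansion (fun x y => K y x) a := by
  have tendsto_swap : Tendsto (Prod.swap : ℝ × ℝ → ℝ × ℝ) (𝓝 0) (𝓝 0) :=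
    continuous_swap.tendsto' _ _ rfl
  refine ((hK.comp_tendsto tendsto_swap).congr_left fun p => ?_).trans
    (isBigO_of_le _ fun p => by simp [abs_sub_comm])
  simp only [Function.comp_apply, Prod.fst_swap, Prod.snd_swap, sub_sq_comm p.2]

theorem eventually_apply_self (hK : HasDiagonalExpansion K a) : ∀ᶠ x in 𝓝 0, K x x = 1 := by
  have diagonal : Tendsto (fun x : ℝ => (x, x)) (𝓝 0) (𝓝 0) :=
    Continuous.tendsto' (by fun_prop) _ _ rfl
  filter_upwards [diagonal.eventually hK.eq_zero_imp] with x hx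
  simpa [sub_eq_zero] using hx (by simp)

theorem one_sub_mul_swap_isBigO (hK : HasDiagonalExpansion K a) :
    (fun p : ℝ × ℝ => 1 - K p.1 p.2 * K p.2 p.1 - 2 * a * (p.1 - p.2) ^ 2)
      =O[𝓝 0] fun p => (p.1 - p.2) ^ 3 := by
  have mul_continuous {F f : ℝ × ℝ → ℝ} (hF : F =O[𝓝 0] fun p => (p.1 - p.2) ^ 3)
      (hf : Continuous f) : (fun p => F p * f p) =O[𝓝 0] fun p => (p.1 - p.2) ^ 3 := by
    simpa only [mul_one] using hF.mul (hf.continuousAt.isBigO_one ℝ)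
  have first : (fun p : ℝ × ℝ => (K p.1 p.2 - (1 - a * (p.1 - p.2) ^ 2)) * K p.2 p.1)
      =O[𝓝 0] fun p => (p.1 - p.2) ^ 3 := by
    simpa only [mul_one] using IsBigO.mul hK hK.swap.isBigO_one
  have second := mul_continuous hK.swap (f := fun p => 1 - a * (p.1 - p.2) ^ 2) (by fun_prop)
  have quartic := mul_continuous (isBigO_refl _ _) (f := fun p => a ^ 2 * (p.1 - p.2))
    (by fun_prop)
  refine ((first.add second).add quartic).neg_left.congr_left fun p => ?_
  ring

theorem pairMinor_isBigO (hK : HasDiagonalExpansion K a) :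
    (fun p : ℝ × ℝ => pairMinor K p - 2 * a * (p.1 - p.2) ^ 2)
      =O[𝓝 0] fun p => (p.1 - p.2) ^ 3 := by
  refine hK.one_sub_mul_swap_isBigO.congr' ?_ .rfl
  filter_upwards [continuous_fst.tendsto' 0 0 rfl |>.eventually hK.eventually_apply_self,
    continuous_snd.tendsto' 0 0 rfl |>.eventually hK.eventually_apply_self] with p h_fst h_snd
  rw [pairMinor, h_fst, h_snd, one_mul]

theorem eventually_minorIntegral_one_eq (hK : HasDiagonalExpansion K a) :
    ∀ᶠ s in 𝓝[>] 0, minorIntegral K (Set.Ioo 0 s) 1 = s := by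
  have eventually_diag : ∀ᶠ p : ℝ × ℝ in 𝓝 0, K p.1 p.1 = 1 :=
    (continuous_fst.tendsto' 0 0 rfl).eventually hK.eventually_apply_self
  filter_upwards [eventually_forall_mem_Ioo_prod_Ioo eventually_diag, self_mem_nhdsWithin]
    with s hdiag (hs : 0 < s)
  rw [minorIntegral_one, setIntegral_congr_fun measurableSet_Ioo fun x hx => hdiag (x, x) ⟨hx, hx⟩,
    setIntegral_const, Real.volume_real_Ioo_of_le hs.le, smul_eq_mul, mul_one, sub_zero]

theorem eventually_integrableOn_pairMinor (hK : HasDiagonalExpansion K a)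
    (hKm : Measurable (Function.uncurry K)) :
    ∀ᶠ s : ℝ in 𝓝[>] 0, IntegrableOn (pairMinor K) (Set.Ioo 0 s ×ˢ Set.Ioo 0 s) := by
  have bounded : pairMinor K =O[𝓝 0] fun _ => (1 : ℝ) := by
    have continuous_bounded {f : ℝ × ℝ → ℝ} (hf : Continuous f) : f =O[𝓝 0] fun _ => (1 : ℝ) :=
      hf.continuousAt.isBigO_one ℝ
    exact ((hK.pairMinor_isBigO.trans (continuous_bounded (by fun_prop))).add
      (continuous_bounded (f := fun p => 2 * a * (p.1 - p.2) ^ 2) (by fun_prop))).congr_left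
      fun p => sub_add_cancel _ _
  have measurable : Measurable (pairMinor K) := by
    have measurable_K {f g : ℝ × ℝ → ℝ} (hf : Measurable f) (hg : Measurable g) :
        Measurable fun p => K (f p) (g p) := hKm.comp (hf.prodMk hg)
    exact ((measurable_K measurable_fst measurable_fst).mul
      (measurable_K measurable_snd measurable_snd)).sub
      ((measurable_K measurable_fst measurable_snd).mul
      (measurable_K measurable_snd measurable_fst))
  have integrable_near_zero := bounded.integrableAtFilter
    measurable.stronglyMeasurable.stronglyMeasurableAtFilter
    ((continuous_const.locallyIntegrable (μ := volume)) 0)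
  exact tendsto_Ioo_prod_Ioo_smallSets.eventually integrable_near_zero.eventually

theorem minorIntegral_two_isBigO (hK : HasDiagonalExpansion K a)
    (hKm : Measurable (Function.uncurry K)) :
    (fun s : ℝ => minorIntegral K (Set.Ioo 0 s) 2 - a / 3 * s ^ 4) =O[𝓝[>] 0] fun s => s ^ 5 := by
  have det_remainder := hK.pairMinor_isBigO.trans (fst_sub_snd_isBigO_norm.pow 3)
  refine (isBigO_setIntegral_Ioo_prod_Ioo det_remainder).congr' ?_ .rfl
  filter_upwards [hK.eventually_integrableOn_pairMinor hKm, self_mem_nhdsWithin]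
    with s hminor (hs : 0 < s)
  rw [integral_sub hminor ((integrableOn_Ioo_prod_Ioo_sub_sq s).const_mul _), integral_const_mul,
    setIntegral_Ioo_prod_Ioo_sub_sq hs.le, minorIntegral_two]
  ring

theorem fredholmDet_Ioo_isBigO (hK : HasDiagonalExpansion K a)
    (hKm : Measurable (Function.uncurry K)) (ξ : ℝ) :
    (fun s : ℝ => fredholmDet K (Set.Ioo 0 s) ξ - (1 - ξ * s + a * ξ ^ 2 / 6 * s ^ 4))
      =O[𝓝[>] 0] fun s => s ^ 5 := by
  have tail := fredholmDet_Ioo_sub_sum_isBigO hK.sub_one_isBigO_norm ξ 2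
  have two_point := (hK.minorIntegral_two_isBigO hKm).const_mul_left (ξ ^ 2 / 2)
  refine (tail.add two_point).congr' ?_ .rfl
  filter_upwards [hK.eventually_minorIntegral_one_eq] with s h_one
  simp only [Finset.sum_range_succ, Finset.sum_range_zero, minorIntegral_zero, h_one]
  norm_num
  ring

end HasDiagonalExpansion

end KernelExpansion

section SineQuotient

theorem sin_sub_cubic_isBigO : (fun x : ℝ => sin x - (x - x ^ 3 / 6)) =O[𝓝 0] fun x => x ^ 5 := by
  refine .of_bound (1 / 100) ?_
  filter_upwards [Metric.closedBall_mem_nhds (0 : ℝ) one_pos] with x hx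
  rw [norm_pow, one_div_mul_eq_div]
  exact Real.sin_bound (mem_closedBall_zero_iff.mp hx)

theorem sin_mul_sub_isBigO (c : ℝ) :
    (fun t : ℝ => sin (c * t) - c * sin t * (1 - (c ^ 2 - 1) / 6 * t ^ 2))
      =O[𝓝 0] fun t => t ^ 5 := by
  have scaled : (fun t => sin (c * t) - (c * t - (c * t) ^ 3 / 6)) =O[𝓝 0] fun t => t ^ 5 := by
    have tendsto_scale : Tendsto (fun t => c * t) (𝓝 0) (𝓝 0) :=
      Continuous.tendsto' (by fun_prop) _ _ (mul_zero c)
    refine (sin_sub_cubic_isBigO.comp_tendsto tendsto_scale).trans ?_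
    simpa only [Function.comp_def, mul_pow] using (isBigO_refl _ _).const_mul_left (c ^ 5)
  have unscaled : (fun t => (sin t - (t - t ^ 3 / 6)) * (c * (1 - (c ^ 2 - 1) / 6 * t ^ 2)))
      =O[𝓝 0] fun t => t ^ 5 := by
    have factor_bounded : (fun t => c * (1 - (c ^ 2 - 1) / 6 * t ^ 2)) =O[𝓝 0] fun _ => (1 : ℝ) :=
      (Continuous.continuousAt (by fun_prop)).isBigO_one ℝ
    simpa only [mul_one] using sin_sub_cubic_isBigO.mul factor_bounded
  have quintic := (isBigO_refl (fun t : ℝ => t ^ 5) (𝓝 0)).const_mul_left (c * (c ^ 2 - 1) / 36)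
  refine ((scaled.sub unscaled).sub quintic).congr_left fun t => ?_
  ring

/-- The quotient `sin(ct)/(c sin t)`, with value `1` at `t = 0`; for `c = N` this is the
`N`-th Dirichlet kernel normalised at the origin. -/
noncomputable def sinQuotient (c t : ℝ) : ℝ :=
  if t = 0 then 1 else sin (c * t) / (c * sin t)

theorem sinQuotient_isBigO {c : ℝ} (hc : c ≠ 0) :
    (fun t => sinQuotient c t - (1 - (c ^ 2 - 1) / 6 * t ^ 2)) =O[𝓝 0] fun t => t ^ 4 := by
  have inv_sin : (fun t => (c * sin t)⁻¹) =O[𝓝[≠] 0] fun t => t⁻¹ := by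
    simp only [mul_inv]
    exact (isEquivalent_sin.inv.isBigO.mono nhdsWithin_le_nhds).const_mul_left c⁻¹
  have sin_ne_zero : ∀ᶠ t in 𝓝[≠] (0 : ℝ), sin t ≠ 0 :=
    (Real.hasDerivAt_sin 0).eventually_ne (by simp)
  have punctured : (fun t => sinQuotient c t - (1 - (c ^ 2 - 1) / 6 * t ^ 2)) =O[𝓝[≠] 0]
      fun t => t ^ 4 := by
    refine (((sin_mul_sub_isBigO c).mono nhdsWithin_le_nhds).mul inv_sin).congr' ?_ ?_
    · filter_upwards [sin_ne_zero, self_mem_nhdsWithin] with t hsin (ht : t ≠ 0)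
      rw [sinQuotient, if_neg ht]
      field_simp
    · filter_upwards [self_mem_nhdsWithin] with t (ht : t ≠ 0)
      field_simp
  rw [← nhdsNE_sup_pure, isBigO_sup]
  exact ⟨punctured, isBigO_pure.mpr fun _ => by simp [sinQuotient]⟩

end SineQuotient

section CUE

theorem cueKernel_eq_sinQuotient {N : ℕ} (hN : N ≠ 0) (x y : ℝ) :
    cueKernel N x y = sinQuotient N (π * (x - y) / N) := by
  have : (N : ℝ) ≠ 0 := Nat.cast_ne_zero.mpr hN
  by_cases h : x = y
  · simp [cueKernel, sinQuotient, h]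
  · rw [cueKernel, sinQuotient, if_neg h, if_neg (by simp [sub_eq_zero, pi_ne_zero, h, this]),
      mul_div_cancel₀ _ this]

theorem measurable_cueKernel (N : ℕ) : Measurable (Function.uncurry (cueKernel N)) := by
  refine Measurable.ite (measurableSet_eq_fun measurable_fst measurable_snd) ?_ ?_ <;> fun_prop

theorem cueKernel_hasDiagonalExpansion {N : ℕ} (hN : N ≠ 0) :
    HasDiagonalExpansion (cueKernel N) (π ^ 2 * (1 - 1 / (N : ℝ) ^ 2) / 6) := by
  have hN' : (N : ℝ) ≠ 0 := Nat.cast_ne_zero.mpr hN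
  have tendsto_angle : Tendsto (fun p : ℝ × ℝ => π * (p.1 - p.2) / N) (𝓝 0) (𝓝 0) :=
    Continuous.tendsto' (by fun_prop) _ _ (by simp)
  have quartic : (fun p : ℝ × ℝ => (π * (p.1 - p.2) / N) ^ 4) =O[𝓝 0]
      fun p => (p.1 - p.2) ^ 3 := by
    have pow_isLittleO : (fun u : ℝ => u ^ 4) =o[𝓝 0] fun u => u ^ 3 :=
      isLittleO_pow_pow (by norm_num)
    simp only [mul_div_right_comm π, mul_pow]
    exact (pow_isLittleO.comp_tendsto tendsto_fst_sub_snd).isBigO.const_mul_left _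
  refine (((sinQuotient_isBigO hN').comp_tendsto tendsto_angle).trans quartic).congr_left
    fun p => ?_
  rw [Function.comp_apply, cueKernel_eq_sinQuotient hN]
  field_simp

end CUE

/-- For every positive integer `N` (and fixed `ξ`), the finite-`N` Fredholm determinant
has the small-`s` expansion
`det(I − ξ𝕂ˢ_N) = 1 − ξs + ((1 − 1/N²)ξ²π²/36)s⁴ + O(s⁵)` as `s → 0⁺`. -/
theorem cueFredholmDet_small_s (N : ℕ) (hN : 1 ≤ N) (ξ : ℝ) :
    (fun s : ℝ => cueFredholmDet N ξ s
        - (1 - ξ * s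
            + ((1 - 1 / (N : ℝ) ^ 2) * ξ ^ 2 * Real.pi ^ 2 / 36) * s ^ 4))
      =O[𝓝[>] 0] (fun s : ℝ => s ^ 5) := by
  have hK := cueKernel_hasDiagonalExpansion (Nat.one_le_iff_ne_zero.mp hN)
  refine (hK.fredholmDet_Ioo_isBigO (measurable_cueKernel N) ξ).congr_left fun s => ?_
  rw [show cueFredholmDet N ξ s = fredholmDet (cueKernel N) (Set.Ioo 0 s) ξ from rfl]
  ring
end
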